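/- Let N ≥ 2, let Ω ⊂ ℝ^N be a nonempty bounded open set, and let p satisfy 2 < p < 2N/(N−2) if N ≥ 3 and 2 < p < ∞ if N = 2. Then there exists ρ > 0 such that every continuously differentiable function u : ℝ^N → ℝ with compact support contained in Ω and ∫_Ω |∇u|² dx ≤ ρ² satisfies J(u) ≥ (1/3) ∫_Ω |∇u|² dx. -/

import Mathlib

open MeasureTheory Metric Set

/-- The free-boundary energy functional
`J(u) = ∫_Ω [ (1/2)|∇u|² + χ_{u>1} − (1/p)(u−1)₊^p ] dx`. -/
noncomputable def J {N : ℕ} (Ω : Set (EuclideanSpace ℝ (Fin N))) (p : ℝ)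
    (u : EuclideanSpace ℝ (Fin N) → ℝ) : ℝ :=
  ∫ x in Ω, ((1 / 2) * ‖gradient u x‖ ^ 2
    + Set.indicator {y | 1 < u y} (fun _ => (1 : ℝ)) x
    - (1 / p) * (max (u x - 1) 0) ^ p)

/-!
Write `A = ∫ |∇u|²` and `v = (u - 1)₊`. Since `u` is supported in `Ω`, all integrals may be taken
over the whole space, and it suffices that for every `ε > 0`, once `A` is small enough,
`∫ v^p ≤ ε (A + |{u > 1}|)`.

* If `N ≥ 3`, then `v^p ≤ |u|^q` for `q = 2N/(N-2)`, because `v` vanishes where `u ≤ 1`. The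
  Sobolev inequality bounds `∫ |u|^q` by a multiple of `A^(q/2)`, which is `o(A)` as `q > 2`.
* If `N = 2`, the inequality `‖w‖₂ ≤ C ‖∇w‖₁` for `w = v^(p/2+1)` and Cauchy-Schwarz give
  `∫ v^(p+2) ≤ K A ∫ v^p`. Since `v^p ≤ (ε/2) χ_{u>1} + L v^(p+2)`, integrating and absorbing
  `L K A ∫ v^p` into the left-hand side leaves `∫ v^p ≤ ε |{u > 1}|` once `L K A ≤ 1/2`.
-/

open Filter Module
open scoped NNReal Topology

section RealPowers

theorem continuous_max_zero_rpow {s : ℝ} (hs : 0 ≤ s) : Continuous fun t : ℝ ↦ max t 0 ^ s :=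
  (continuous_id.max continuous_const).rpow_const fun _ ↦ .inr hs

theorem hasDerivAt_max_zero_rpow {s : ℝ} (hs : 1 < s) (t : ℝ) :
    HasDerivAt (fun t : ℝ ↦ max t 0 ^ s) (s * max t 0 ^ (s - 1)) t := by
  have deriv_of_ne (t : ℝ) (ht : t ≠ 0) :
      HasDerivAt (fun t : ℝ ↦ max t 0 ^ s) (s * max t 0 ^ (s - 1)) t := by
    rcases ht.lt_or_gt with ht | ht
    · rw [max_eq_right ht.le, Real.zero_rpow (by linarith), mul_zero]
      refine (hasDerivAt_const t (0 : ℝ)).congr_of_eventuallyEq ?_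
      filter_upwards [gt_mem_nhds ht] with r hr
      rw [max_eq_right hr.le, Real.zero_rpow (by linarith)]
    · rw [max_eq_left ht.le]
      refine (Real.hasDerivAt_rpow_const (.inl ht.ne')).congr_of_eventuallyEq ?_
      filter_upwards [lt_mem_nhds ht] with r hr
      rw [max_eq_left hr.le]
  rcases eq_or_ne t 0 with rfl | ht
  · exact hasDerivAt_of_hasDerivAt_of_ne deriv_of_ne
      (continuous_max_zero_rpow (by linarith)).continuousAt
      ((continuous_max_zero_rpow (by linarith)).const_mul s).continuousAt
  · exact deriv_of_ne t ht

theorem rpow_le_add_mul_rpow_add {t δ p q : ℝ} (ht : 0 ≤ t) (hδ : 0 < δ) (hp : 0 < p)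
    (hq : 0 ≤ q) : t ^ p ≤ δ + δ ^ (-(q / p)) * t ^ (p + q) := by
  rcases le_or_gt (t ^ p) δ with h | h
  · exact h.trans (le_add_of_nonneg_right (by positivity))
  · have hδt : δ ^ (q / p) ≤ t ^ q :=
      calc δ ^ (q / p) ≤ (t ^ p) ^ (q / p) := by gcongr
        _ = t ^ q := by rw [← Real.rpow_mul ht, mul_div_cancel₀ _ hp.ne']
    calc t ^ p = δ ^ (-(q / p)) * (t ^ p * δ ^ (q / p)) := by
          rw [mul_left_comm, ← Real.rpow_add hδ, neg_add_cancel, Real.rpow_zero, mul_one]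
      _ ≤ δ ^ (-(q / p)) * (t ^ p * t ^ q) := by gcongr
      _ = δ ^ (-(q / p)) * t ^ (p + q) := by rw [Real.rpow_add_of_nonneg ht hp.le hq]
      _ ≤ δ + δ ^ (-(q / p)) * t ^ (p + q) := le_add_of_nonneg_left hδ.le

theorem max_sub_one_rpow_le_abs_rpow (t : ℝ) {p q : ℝ} (hp : 0 < p) (hpq : p ≤ q) :
    max (t - 1) 0 ^ p ≤ |t| ^ q := by
  rcases le_total t 1 with ht | ht
  · rw [max_eq_right (by linarith), Real.zero_rpow hp.ne']
    positivity
  · rw [max_eq_left (by linarith), abs_of_nonneg (by linarith)]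
    calc (t - 1) ^ p ≤ t ^ p := by gcongr; linarith
      _ ≤ t ^ q := Real.rpow_le_rpow_of_exponent_le ht hpq

theorem exists_mul_rpow_le_mul_of_le {K ε θ : ℝ} (hε : 0 < ε) (hθ : 1 < θ) :
    ∃ δ > 0, ∀ A, 0 ≤ A → A ≤ δ → K * A ^ θ ≤ ε * A := by
  have hlim : Tendsto (fun A : ℝ ↦ K * A ^ (θ - 1)) (𝓝 0) (𝓝 0) := by
    have := ((Real.continuousAt_rpow_const 0 (θ - 1) (.inr (by linarith))).const_mul K).tendsto
    rwa [Real.zero_rpow (by linarith), mul_zero] at this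
  obtain ⟨δ, hδ, h⟩ := Metric.eventually_nhds_iff_ball.1 (hlim.eventually_lt_const hε)
  refine ⟨δ / 2, half_pos hδ, fun A hA hAδ ↦ ?_⟩
  have hA_mem : A ∈ ball (0 : ℝ) δ := by
    rw [mem_ball_zero_iff, Real.norm_of_nonneg hA]
    linarith
  calc K * A ^ θ = K * A ^ (θ - 1) * A := by
        rw [mul_assoc, ← Real.rpow_add_one' hA (by linarith), sub_add_cancel]
    _ ≤ ε * A := by gcongr; exact (h A hA_mem).le

end RealPowers

section Integrability

variable {X : Type*} [TopologicalSpace X] [MeasurableSpace X] (μ : Measure X)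

theorem integral_indicator_setOf_lt [OpensMeasurableSpace X] {u : X → ℝ} (hu : Continuous u)
    (a : ℝ) : ∫ x, {x | a < u x}.indicator (fun _ ↦ (1 : ℝ)) x ∂μ = μ.real {x | a < u x} :=
  integral_indicator_one (isOpen_lt continuous_const hu).measurableSet

variable [IsFiniteMeasureOnCompacts μ]

theorem measure_setOf_lt_lt_top {u : X → ℝ} (hc : HasCompactSupport u) {a : ℝ} (ha : 0 ≤ a) :
    μ {x | a < u x} < ⊤ :=
  (measure_mono fun _ hx ↦ subset_tsupport u (ha.trans_lt hx).ne').trans_lt hc.measure_lt_top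

variable [OpensMeasurableSpace X]

theorem integrable_indicator_setOf_lt {u : X → ℝ} (hu : Continuous u) (hc : HasCompactSupport u)
    {a : ℝ} (ha : 0 ≤ a) : Integrable ({x | a < u x}.indicator fun _ ↦ (1 : ℝ)) μ :=
  (integrable_indicator_iff (isOpen_lt continuous_const hu).measurableSet).2
    (integrableOn_const (measure_setOf_lt_lt_top μ hc ha).ne)

theorem integrable_comp_of_hasCompactSupport {Y Z : Type*} [TopologicalSpace Y] [Zero Y]
    [NormedAddCommGroup Z] {g : Y → Z} {u : X → Y} (hg : Continuous g) (hg₀ : g 0 = 0)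
    (hu : Continuous u) (hc : HasCompactSupport u) : Integrable (fun x ↦ g (u x)) μ :=
  (hg.comp hu).integrable_of_hasCompactSupport (hc.comp_left hg₀)

theorem integrable_max_sub_one_rpow {u : X → ℝ} (hu : Continuous u) (hc : HasCompactSupport u)
    {p : ℝ} (hp : 0 < p) : Integrable (fun x ↦ max (u x - 1) 0 ^ p) μ :=
  integrable_comp_of_hasCompactSupport μ (g := fun t : ℝ ↦ max (t - 1) 0 ^ p)
    ((continuous_max_zero_rpow hp.le).comp (continuous_sub_right 1))
    (by simp [hp.ne']) hu hc

theorem integrable_norm_fderiv_sq {E F : Type*} [NormedAddCommGroup E] [NormedSpace ℝ E]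
    [NormedAddCommGroup F] [NormedSpace ℝ F] [MeasurableSpace E] [OpensMeasurableSpace E]
    (μ : Measure E) [IsFiniteMeasureOnCompacts μ] {u : E → F} (hu : ContDiff ℝ 1 u)
    (hc : HasCompactSupport u) : Integrable (fun x ↦ ‖fderiv ℝ u x‖ ^ 2) μ :=
  integrable_comp_of_hasCompactSupport μ (g := fun L ↦ ‖L‖ ^ 2) (by fun_prop) (by simp)
    (hu.continuous_fderiv one_ne_zero) (hc.fderiv (𝕜 := ℝ))

end Integrability

section Sobolev

variable {E F : Type*} [NormedAddCommGroup E] [NormedSpace ℝ E] [FiniteDimensional ℝ E]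
  [MeasurableSpace E] [BorelSpace E] (μ : Measure E) [μ.IsAddHaarMeasure]

theorem exists_integral_norm_rpow_le_integral_norm_fderiv_rpow [Nontrivial E]
    [NormedAddCommGroup F] [NormedSpace ℝ F] [FiniteDimensional ℝ F] {p q : ℝ} (hp : 1 ≤ p)
    (hq : 0 < q) (hpq : q⁻¹ = p⁻¹ - (finrank ℝ E : ℝ)⁻¹) :
    ∃ K : ℝ, 0 ≤ K ∧ ∀ u : E → F, ContDiff ℝ 1 u → HasCompactSupport u →
      ∫ x, ‖u x‖ ^ q ∂μ ≤ K * (∫ x, ‖fderiv ℝ u x‖ ^ p ∂μ) ^ (q / p) := by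
  lift p to ℝ≥0 using by linarith
  lift q to ℝ≥0 using hq.le
  set C := SNormLESNormFDerivOfEqConst F μ p
  refine ⟨(C : ℝ) ^ (q : ℝ), by positivity, fun u hu hc ↦ ?_⟩
  have hp₀ : (0 : ℝ) < p := by linarith
  have hu_mem : MemLp u q μ := hu.continuous.memLp_of_hasCompactSupport hc
  have hDu_mem : MemLp (fderiv ℝ u) p μ :=
    (hu.continuous_fderiv one_ne_zero).memLp_of_hasCompactSupport (hc.fderiv (𝕜 := ℝ))
  have sobolev : (∫ x, ‖u x‖ ^ (q : ℝ) ∂μ) ^ (q : ℝ)⁻¹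
      ≤ C * (∫ x, ‖fderiv ℝ u x‖ ^ (p : ℝ) ∂μ) ^ (p : ℝ)⁻¹ := by
    have h := eLpNorm_le_eLpNorm_fderiv_of_eq μ hu hc (by exact_mod_cast hp) finrank_pos hpq
    rw [hu_mem.eLpNorm_eq_integral_rpow_norm (by simpa using hq.ne') (by simp),
      hDu_mem.eLpNorm_eq_integral_rpow_norm (by simpa using hp₀.ne') (by simp),
      ← ENNReal.ofReal_coe_nnreal (p := SNormLESNormFDerivOfEqConst F μ p),
      ← ENNReal.ofReal_mul (by positivity), ENNReal.ofReal_le_ofReal_iff (by positivity)] at h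
    simpa using h
  calc ∫ x, ‖u x‖ ^ (q : ℝ) ∂μ
      = ((∫ x, ‖u x‖ ^ (q : ℝ) ∂μ) ^ (q : ℝ)⁻¹) ^ (q : ℝ) :=
        (Real.rpow_inv_rpow (by positivity) hq.ne').symm
    _ ≤ (C * (∫ x, ‖fderiv ℝ u x‖ ^ (p : ℝ) ∂μ) ^ (p : ℝ)⁻¹) ^ (q : ℝ) := by gcongr
    _ = (C : ℝ) ^ (q : ℝ) * (∫ x, ‖fderiv ℝ u x‖ ^ (p : ℝ) ∂μ) ^ (q / p : ℝ) := by
      rw [Real.mul_rpow (by positivity) (by positivity), ← Real.rpow_mul (by positivity),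
        inv_mul_eq_div]

theorem exists_integral_sq_comp_le_of_finrank_eq_two (hE : finrank ℝ E = 2) :
    ∃ K : ℝ, 0 ≤ K ∧ ∀ (φ : ℝ → ℝ) (u : E → ℝ), ContDiff ℝ 1 φ → φ 0 = 0 → deriv φ 0 = 0 →
      ContDiff ℝ 1 u → HasCompactSupport u →
      ∫ x, φ (u x) ^ 2 ∂μ ≤ K * (∫ x, ‖fderiv ℝ u x‖ ^ 2 ∂μ) * ∫ x, deriv φ (u x) ^ 2 ∂μ := by
  have : Nontrivial E := Module.nontrivial_of_finrank_pos (R := ℝ) (by omega)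
  obtain ⟨K, hK, sobolev⟩ := exists_integral_norm_rpow_le_integral_norm_fderiv_rpow (F := ℝ) μ
    le_rfl zero_lt_two (by rw [hE]; norm_num)
  refine ⟨K, hK, fun φ u hφ hφ₀ hφ'₀ hu hc ↦ ?_⟩
  have hφ' : Continuous (deriv φ) := hφ.continuous_deriv le_rfl
  have chain_rule (x : E) : ‖fderiv ℝ (φ ∘ u) x‖ = |deriv φ (u x)| * ‖fderiv ℝ u x‖ := by
    rw [((hφ.differentiable one_ne_zero (u x)).hasDerivAt.comp_hasFDerivAt x
      (hu.differentiable one_ne_zero x).hasFDerivAt).fderiv, norm_smul, Real.norm_eq_abs]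
  have cauchy_schwarz : ∫ x, ‖fderiv ℝ (φ ∘ u) x‖ ∂μ
      ≤ √(∫ x, deriv φ (u x) ^ 2 ∂μ) * √(∫ x, ‖fderiv ℝ u x‖ ^ 2 ∂μ) := by
    have hf : MemLp (fun x ↦ |deriv φ (u x)|) (ENNReal.ofReal 2) μ :=
      (hφ'.comp hu.continuous).abs.memLp_of_hasCompactSupport
        (hc.comp_left (g := fun t ↦ |deriv φ t|) (by simpa using hφ'₀))
    have hg : MemLp (fun x ↦ ‖fderiv ℝ u x‖) (ENNReal.ofReal 2) μ :=
      (hu.continuous_fderiv one_ne_zero).norm.memLp_of_hasCompactSupport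
        (hc.fderiv (𝕜 := ℝ)).norm
    simpa [chain_rule, Real.sqrt_eq_rpow] using integral_mul_le_Lp_mul_Lq_of_nonneg
      Real.HolderConjugate.two_two (.of_forall fun _ ↦ abs_nonneg _)
      (.of_forall fun _ ↦ norm_nonneg _) hf hg
  calc ∫ x, φ (u x) ^ 2 ∂μ ≤ K * (∫ x, ‖fderiv ℝ (φ ∘ u) x‖ ∂μ) ^ 2 := by
        simpa using sobolev (φ ∘ u) (hφ.comp hu) (hc.comp_left hφ₀)
    _ ≤ K * (√(∫ x, deriv φ (u x) ^ 2 ∂μ) * √(∫ x, ‖fderiv ℝ u x‖ ^ 2 ∂μ)) ^ 2 := by gcongr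
    _ = K * (∫ x, ‖fderiv ℝ u x‖ ^ 2 ∂μ) * ∫ x, deriv φ (u x) ^ 2 ∂μ := by
      rw [mul_pow, Real.sq_sqrt (by positivity), Real.sq_sqrt (by positivity)]
      ring

end Sobolev

section Excess

theorem integral_max_sub_one_rpow_le_add_integral_rpow_add {X : Type*} [TopologicalSpace X]
    [MeasurableSpace X] [OpensMeasurableSpace X] (μ : Measure X) [IsFiniteMeasureOnCompacts μ]
    {u : X → ℝ} (hu : Continuous u) (hc : HasCompactSupport u) {δ p q : ℝ} (hδ : 0 < δ)
    (hp : 0 < p) (hq : 0 ≤ q) :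
    ∫ x, max (u x - 1) 0 ^ p ∂μ ≤ δ * μ.real {x | 1 < u x}
      + δ ^ (-(q / p)) * ∫ x, max (u x - 1) 0 ^ (p + q) ∂μ := by
  have hpq : 0 < p + q := by positivity
  have hind := (integrable_indicator_setOf_lt μ hu hc zero_le_one).const_mul δ
  have hexc := (integrable_max_sub_one_rpow μ hu hc hpq).const_mul (δ ^ (-(q / p)))
  rw [← integral_indicator_setOf_lt μ hu, ← integral_const_mul, ← integral_const_mul,
    ← integral_add hind hexc]
  refine integral_mono (integrable_max_sub_one_rpow μ hu hc hp) (hind.add hexc) fun x ↦ ?_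
  by_cases hx : 1 < u x
  · simpa [hx] using rpow_le_add_mul_rpow_add (le_max_right (u x - 1) 0) hδ hp hq
  · simp [hx, max_eq_right (sub_nonpos.2 (not_lt.1 hx)), hp.ne', hpq.ne']

variable {E : Type*} [NormedAddCommGroup E] [NormedSpace ℝ E] [FiniteDimensional ℝ E]
  [MeasurableSpace E] [BorelSpace E] (μ : Measure E) [μ.IsAddHaarMeasure] {p ε : ℝ}

theorem exists_integral_max_sub_one_rpow_add_two_le (hE : finrank ℝ E = 2) (hp : 0 < p) :
    ∃ K : ℝ, 0 ≤ K ∧ ∀ u : E → ℝ, ContDiff ℝ 1 u → HasCompactSupport u →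
      ∫ x, max (u x - 1) 0 ^ (p + 2) ∂μ
        ≤ K * (∫ x, ‖fderiv ℝ u x‖ ^ 2 ∂μ) * ∫ x, max (u x - 1) 0 ^ p ∂μ := by
  obtain ⟨K, hK, h⟩ := exists_integral_sq_comp_le_of_finrank_eq_two μ hE
  set s : ℝ := p / 2 + 1 with hs
  have hs_one : 1 < s := by linarith
  set φ : ℝ → ℝ := fun t ↦ max (t - 1) 0 ^ s
  have hφ_deriv (t : ℝ) : HasDerivAt φ (s * max (t - 1) 0 ^ (p / 2)) t := by
    simpa [hs] using (hasDerivAt_max_zero_rpow hs_one (t - 1)).comp_sub_const t 1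
  have deriv_φ : deriv φ = fun t ↦ s * max (t - 1) 0 ^ (p / 2) :=
    funext fun t ↦ (hφ_deriv t).deriv
  have hφ : ContDiff ℝ 1 φ := by
    refine contDiff_one_iff_deriv.2 ⟨fun t ↦ (hφ_deriv t).differentiableAt, ?_⟩
    rw [deriv_φ]
    exact ((continuous_max_zero_rpow (half_pos hp).le).comp (continuous_sub_right 1)).const_mul s
  have sq_rpow (t r : ℝ) : (max (t - 1) 0 ^ r) ^ 2 = max (t - 1) 0 ^ (r * 2) := by
    rw [Real.rpow_mul (le_max_right _ _), Real.rpow_two]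
  refine ⟨K * s ^ 2, by positivity, fun u hu hc ↦ ?_⟩
  have hs_two : s * 2 = p + 2 := by rw [hs]; ring
  calc ∫ x, max (u x - 1) 0 ^ (p + 2) ∂μ = ∫ x, φ (u x) ^ 2 ∂μ := by
        simp only [φ, sq_rpow, hs_two]
    _ ≤ K * (∫ x, ‖fderiv ℝ u x‖ ^ 2 ∂μ) * ∫ x, deriv φ (u x) ^ 2 ∂μ :=
        h φ u hφ (by simp [φ, (zero_lt_one.trans hs_one).ne']) (by simp [deriv_φ, hp.ne']) hu hc
    _ = K * s ^ 2 * (∫ x, ‖fderiv ℝ u x‖ ^ 2 ∂μ) * ∫ x, max (u x - 1) 0 ^ p ∂μ := by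
        simp only [deriv_φ, mul_pow, sq_rpow, integral_const_mul, div_mul_cancel₀ p two_ne_zero]
        ring

theorem exists_integral_max_sub_one_rpow_le_measureReal (hE : finrank ℝ E = 2) (hp : 0 < p)
    (hε : 0 < ε) :
    ∃ δ > 0, ∀ u : E → ℝ, ContDiff ℝ 1 u → HasCompactSupport u →
      ∫ x, ‖fderiv ℝ u x‖ ^ 2 ∂μ ≤ δ →
      ∫ x, max (u x - 1) 0 ^ p ∂μ ≤ ε * μ.real {x | 1 < u x} := by
  obtain ⟨K, hK, h⟩ := exists_integral_max_sub_one_rpow_add_two_le μ hE hp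
  set L : ℝ := (ε / 2) ^ (-(2 / p))
  refine ⟨1 / (2 * (L * K + 1)), by positivity, fun u hu hc hδ ↦ ?_⟩
  set A := ∫ x, ‖fderiv ℝ u x‖ ^ 2 ∂μ
  set V := ∫ x, max (u x - 1) 0 ^ p ∂μ
  have : 0 ≤ V := by positivity
  have absorb : L * (K * A * V) ≤ V / 2 :=
    calc L * (K * A * V) = L * K * A * V := by ring
      _ ≤ (L * K + 1) * (1 / (2 * (L * K + 1))) * V := by gcongr; linarith
      _ = V / 2 := by
        have : L * K + 1 ≠ 0 := by positivity
        field_simp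
  have : V ≤ ε / 2 * μ.real {x | 1 < u x} + V / 2 :=
    calc V ≤ ε / 2 * μ.real {x | 1 < u x} + L * ∫ x, max (u x - 1) 0 ^ (p + 2) ∂μ :=
          integral_max_sub_one_rpow_le_add_integral_rpow_add μ hu.continuous hc (half_pos hε) hp
            zero_le_two
      _ ≤ ε / 2 * μ.real {x | 1 < u x} + L * (K * A * V) := by gcongr; exact h u hu hc
      _ ≤ ε / 2 * μ.real {x | 1 < u x} + V / 2 := by gcongr
  linarith

theorem exists_integral_max_sub_one_rpow_le_integral_norm_fderiv_sq (hE : 2 < finrank ℝ E)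
    (hp : 0 < p) (hpE : p ≤ 2 * (finrank ℝ E : ℝ) / ((finrank ℝ E : ℝ) - 2)) (hε : 0 < ε) :
    ∃ δ > 0, ∀ u : E → ℝ, ContDiff ℝ 1 u → HasCompactSupport u →
      ∫ x, ‖fderiv ℝ u x‖ ^ 2 ∂μ ≤ δ →
      ∫ x, max (u x - 1) 0 ^ p ∂μ ≤ ε * ∫ x, ‖fderiv ℝ u x‖ ^ 2 ∂μ := by
  have : Nontrivial E := Module.nontrivial_of_finrank_pos (R := ℝ) (by omega)
  have hn : (0 : ℝ) < finrank ℝ E - 2 := sub_pos.2 (by exact_mod_cast hE)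
  set q : ℝ := 2 * (finrank ℝ E : ℝ) / ((finrank ℝ E : ℝ) - 2) with hq
  have two_lt_q : 2 < q := by
    rw [hq, lt_div_iff₀ hn]
    linarith
  have q_conj : q⁻¹ = 2⁻¹ - (finrank ℝ E : ℝ)⁻¹ := by
    rw [hq]
    field_simp
  obtain ⟨K, -, sobolev⟩ := exists_integral_norm_rpow_le_integral_norm_fderiv_rpow (F := ℝ) μ
    one_le_two (by linarith) q_conj
  obtain ⟨δ, hδ, small⟩ := exists_mul_rpow_le_mul_of_le (K := K) hε (by linarith : 1 < q / 2)
  refine ⟨δ, hδ, fun u hu hc huδ ↦ ?_⟩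
  have hu_int : Integrable (fun x ↦ |u x| ^ q) μ :=
    integrable_comp_of_hasCompactSupport μ (g := fun t : ℝ ↦ |t| ^ q)
      (continuous_abs.rpow_const fun _ ↦ .inr (by linarith))
      (by simp [(zero_lt_two.trans two_lt_q).ne']) hu.continuous hc
  calc ∫ x, max (u x - 1) 0 ^ p ∂μ ≤ ∫ x, |u x| ^ q ∂μ :=
        integral_mono (integrable_max_sub_one_rpow μ hu.continuous hc hp) hu_int
          fun x ↦ max_sub_one_rpow_le_abs_rpow (u x) hp hpE
    _ ≤ K * (∫ x, ‖fderiv ℝ u x‖ ^ 2 ∂μ) ^ (q / 2) := by simpa using sobolev u hu hc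
    _ ≤ ε * ∫ x, ‖fderiv ℝ u x‖ ^ 2 ∂μ := small _ (by positivity) huδ

theorem exists_integral_max_sub_one_rpow_le_add_measureReal (hE : 2 ≤ finrank ℝ E) (hp : 0 < p)
    (hpE : 3 ≤ finrank ℝ E → p ≤ 2 * (finrank ℝ E : ℝ) / ((finrank ℝ E : ℝ) - 2)) (hε : 0 < ε) :
    ∃ δ > 0, ∀ u : E → ℝ, ContDiff ℝ 1 u → HasCompactSupport u →
      ∫ x, ‖fderiv ℝ u x‖ ^ 2 ∂μ ≤ δ →
      ∫ x, max (u x - 1) 0 ^ p ∂μ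
        ≤ ε * (∫ x, ‖fderiv ℝ u x‖ ^ 2 ∂μ + μ.real {x | 1 < u x}) := by
  rcases hE.eq_or_lt with hE | hE
  · obtain ⟨δ, hδ, h⟩ := exists_integral_max_sub_one_rpow_le_measureReal μ hE.symm hp hε
    refine ⟨δ, hδ, fun u hu hc huδ ↦ (h u hu hc huδ).trans ?_⟩
    gcongr
    exact le_add_of_nonneg_left (by positivity)
  · obtain ⟨δ, hδ, h⟩ :=
      exists_integral_max_sub_one_rpow_le_integral_norm_fderiv_sq μ hE hp (hpE hE) hε
    refine ⟨δ, hδ, fun u hu hc huδ ↦ (h u hu hc huδ).trans ?_⟩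
    gcongr
    exact le_add_of_nonneg_right (by positivity)

end Excess

section Energy

variable {E : Type*} [NormedAddCommGroup E] [InnerProductSpace ℝ E] [CompleteSpace E]

theorem norm_gradient_eq_norm_fderiv (u : E → ℝ) (x : E) : ‖gradient u x‖ = ‖fderiv ℝ u x‖ := by
  simp [gradient]

theorem setIntegral_norm_gradient_sq [MeasurableSpace E] (μ : Measure E) {Ω : Set E} {u : E → ℝ}
    (hΩ : tsupport u ⊆ Ω) : ∫ x in Ω, ‖gradient u x‖ ^ 2 ∂μ = ∫ x, ‖fderiv ℝ u x‖ ^ 2 ∂μ := by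
  simp only [norm_gradient_eq_norm_fderiv]
  refine setIntegral_eq_integral_of_forall_compl_eq_zero fun x hx ↦ ?_
  rw [fderiv_of_notMem_tsupport ℝ (fun h ↦ hx (hΩ h)), norm_zero, zero_pow two_ne_zero]

theorem J_eq_of_tsupport_subset {N : ℕ} {Ω : Set (EuclideanSpace ℝ (Fin N))}
    {u : EuclideanSpace ℝ (Fin N) → ℝ} {p : ℝ} (hp : 0 < p) (hu : ContDiff ℝ 1 u)
    (hc : HasCompactSupport u) (hΩ : tsupport u ⊆ Ω) :
    J Ω p u = 1 / 2 * (∫ x, ‖fderiv ℝ u x‖ ^ 2) + volume.real {x | 1 < u x}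
      - 1 / p * ∫ x, max (u x - 1) 0 ^ p := by
  have hgrad := (integrable_norm_fderiv_sq volume hu hc).const_mul (1 / 2)
  have hind := integrable_indicator_setOf_lt volume hu.continuous hc zero_le_one
  have hexc := (integrable_max_sub_one_rpow volume hu.continuous hc hp).const_mul (1 / p)
  rw [← integral_indicator_setOf_lt volume hu.continuous, ← integral_const_mul,
    ← integral_const_mul, ← integral_add hgrad hind,
    ← integral_sub (by exact hgrad.add hind) hexc, J]
  simp only [norm_gradient_eq_norm_fderiv]
  refine setIntegral_eq_integral_of_forall_compl_eq_zero fun x hx ↦ ?_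
  have hx' : x ∉ tsupport u := fun h ↦ hx (hΩ h)
  simp [fderiv_of_notMem_tsupport ℝ hx', image_eq_zero_of_notMem_tsupport hx', hp.ne']

end Energy

theorem stmt_11_general {N : ℕ} (hN : 2 ≤ N) (Ω : Set (EuclideanSpace ℝ (Fin N))) {p : ℝ}
    (hp : 0 < p) (hpN : 3 ≤ N → p ≤ 2 * (N : ℝ) / ((N : ℝ) - 2)) {c : ℝ} (hc : c < 1 / 2) :
    ∃ ρ > (0 : ℝ), ∀ u : EuclideanSpace ℝ (Fin N) → ℝ,
      ContDiff ℝ 1 u → HasCompactSupport u → tsupport u ⊆ Ω →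
      (∫ x in Ω, ‖gradient u x‖ ^ 2) ≤ ρ ^ 2 →
      c * (∫ x in Ω, ‖gradient u x‖ ^ 2) ≤ J Ω p u := by
  set η : ℝ := min (1 / 2 - c) 1
  have hη : 0 < η := lt_min (by linarith) one_pos
  obtain ⟨δ, hδ, h⟩ := exists_integral_max_sub_one_rpow_le_add_measureReal
    (volume : Measure (EuclideanSpace ℝ (Fin N))) (by simpa) hp (by simpa) (mul_pos hp hη)
  refine ⟨√δ, Real.sqrt_pos.2 hδ, fun u hu hcs hΩ hρ ↦ ?_⟩
  rw [Real.sq_sqrt hδ.le, setIntegral_norm_gradient_sq volume hΩ] at hρ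
  rw [setIntegral_norm_gradient_sq volume hΩ, J_eq_of_tsupport_subset hp hu hcs hΩ]
  set A := ∫ x, ‖fderiv ℝ u x‖ ^ 2
  set m := volume.real {x | 1 < u x}
  have excess : 1 / p * ∫ x, max (u x - 1) 0 ^ p ≤ (1 / 2 - c) * A + 1 * m :=
    calc 1 / p * ∫ x, max (u x - 1) 0 ^ p ≤ 1 / p * (p * η * (A + m)) := by
          gcongr; exact h u hu hcs hρ
      _ = η * A + η * m := by field_simp
      _ ≤ (1 / 2 - c) * A + 1 * m := by
          have : 0 ≤ A := by positivity
          gcongr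
          exacts [min_le_left _ _, min_le_right _ _]
  linarith

theorem stmt_11 {N : ℕ} (hN : 2 ≤ N) (Ω : Set (EuclideanSpace ℝ (Fin N)))
    (hΩo : IsOpen Ω) (hΩb : Bornology.IsBounded Ω) (hΩne : Ω.Nonempty)
    (p : ℝ) (hp : 2 < p) (hpSub : 3 ≤ N → p < 2 * (N : ℝ) / ((N : ℝ) - 2)) :
    ∃ ρ > (0 : ℝ), ∀ u : EuclideanSpace ℝ (Fin N) → ℝ,
      ContDiff ℝ 1 u → HasCompactSupport u → tsupport u ⊆ Ω →
      (∫ x in Ω, ‖gradient u x‖ ^ 2) ≤ ρ ^ 2 →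
      (1 / 3) * (∫ x in Ω, ‖gradient u x‖ ^ 2) ≤ J Ω p u :=
  stmt_11_general hN Ω (by linarith) (fun h ↦ (hpSub h).le) (by norm_num)
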